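/- Let R be a commutative ring, Λ an additive commutative monoid, and let A and B be commutative R-algebras equipped with gradings 𝒜 : Λ → Submodule R A and ℬ : Λ → Submodule R B making A and B Λ-graded R-algebras. For each λ ∈ Λ let S(λ) be the R-submodule of the tensor product algebra A ⊗_R B spanned by the simple tensors a ⊗ b with a ∈ 𝒜(λ) and b ∈ ℬ(λ). Then 1 ∈ S(0), S(λ₁)·S(λ₂) ⊆ S(λ₁+λ₂) for all λ₁, λ₂ ∈ Λ, the family of submodules S(λ) is independent, and the submodule ⨆_{λ∈Λ} S(λ) is an R-subalgebra of A ⊗_R B; thus this subalgebra (the diagonal tensor product A ⊗^Δ B) is itself a Λ-graded commutative R-algebra with graded pieces S(λ). -/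

import Mathlib

/-!
The unit and multiplicativity conditions are checked on spanning simple tensors, and the subalgebra
is then the supremum of the pieces with the induced multiplication. Independence comes from the
projections `A → 𝒜 l ⊆ A`: tensoring one of them with the identity of `B` gives an endomorphism of
`A ⊗[R] B` that fixes `S l` pointwise (`proj_rTensor_eq_self`) and kills every other piece
(`proj_rTensor_eq_zero`). In particular no flatness is needed.
-/

open scoped TensorProduct

/-- The `λ`-graded piece of the diagonal tensor product of two `Λ`-graded algebras:
the `R`-submodule of `A ⊗[R] B` spanned by the simple tensors `a ⊗ b` with
`a ∈ 𝒜 λ` and `b ∈ ℬ λ`. -/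
def diagTensorPiece {R A B Λ : Type*} [CommRing R] [CommRing A] [CommRing B]
    [Algebra R A] [Algebra R B] (𝒜 : Λ → Submodule R A) (ℬ : Λ → Submodule R B)
    (l : Λ) : Submodule R (A ⊗[R] B) :=
  Submodule.span R {x : A ⊗[R] B | ∃ a ∈ 𝒜 l, ∃ b ∈ ℬ l, x = a ⊗ₜ[R] b}

section

variable {R A B Λ : Type*} [CommRing R] [CommRing A] [CommRing B]
  [Algebra R A] [Algebra R B] [AddCommMonoid Λ] [DecidableEq Λ]
  (𝒜 : Λ → Submodule R A) (ℬ : Λ → Submodule R B) [GradedAlgebra 𝒜]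

theorem proj_rTensor_eq_self (l : Λ) {x : A ⊗[R] B} (hx : x ∈ diagTensorPiece 𝒜 ℬ l) :
    (GradedAlgebra.proj 𝒜 l).rTensor B x = x := by
  have h : diagTensorPiece 𝒜 ℬ l ≤
      LinearMap.eqLocus ((GradedAlgebra.proj 𝒜 l).rTensor B) LinearMap.id := by
    refine Submodule.span_le.2 ?_
    rintro _ ⟨a, ha, b, -, rfl⟩
    simp [LinearMap.mem_eqLocus, GradedAlgebra.proj_apply, DirectSum.decompose_of_mem_same _ ha]
  exact h hx

theorem proj_rTensor_eq_zero {k l : Λ} (hkl : k ≠ l) :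
    diagTensorPiece 𝒜 ℬ k ≤ LinearMap.ker ((GradedAlgebra.proj 𝒜 l).rTensor B) := by
  refine Submodule.span_le.2 ?_
  rintro _ ⟨a, ha, b, -, rfl⟩
  simp [GradedAlgebra.proj_apply, DirectSum.decompose_of_mem_ne _ ha hkl]

theorem diagTensorPiece_iSupIndep : iSupIndep (diagTensorPiece 𝒜 ℬ) := by
  intro l
  rw [Submodule.disjoint_def]
  intro x hx hx'
  have h : (⨆ k, ⨆ _ : k ≠ l, diagTensorPiece 𝒜 ℬ k) ≤
      LinearMap.ker ((GradedAlgebra.proj 𝒜 l).rTensor B) :=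
    iSup₂_le fun k hk => proj_rTensor_eq_zero 𝒜 ℬ hk
  rw [← proj_rTensor_eq_self 𝒜 ℬ l hx]
  exact h hx'

end

/-- Construction 8.1(1): the diagonal tensor product of two `Λ`-graded commutative
`R`-algebras is again a `Λ`-graded commutative `R`-algebra, with graded pieces
`S(λ) = 𝒜(λ) ⊗ ℬ(λ)` inside `A ⊗[R] B`. -/
theorem diagTensorProduct_gradedAlgebra
    {R A B Λ : Type*} [CommRing R] [CommRing A] [CommRing B]
    [Algebra R A] [Algebra R B] [AddCommMonoid Λ] [DecidableEq Λ]
    (𝒜 : Λ → Submodule R A) (ℬ : Λ → Submodule R B)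
    [GradedAlgebra 𝒜] [GradedAlgebra ℬ] :
    (1 : A ⊗[R] B) ∈ diagTensorPiece 𝒜 ℬ (0 : Λ) ∧
    (∀ l₁ l₂ : Λ,
      diagTensorPiece 𝒜 ℬ l₁ * diagTensorPiece 𝒜 ℬ l₂ ≤ diagTensorPiece 𝒜 ℬ (l₁ + l₂)) ∧
    iSupIndep (diagTensorPiece 𝒜 ℬ) ∧
    (∃ T : Subalgebra R (A ⊗[R] B),
      Subalgebra.toSubmodule T = ⨆ l : Λ, diagTensorPiece 𝒜 ℬ l) := by
  have h1 : (1 : A ⊗[R] B) ∈ diagTensorPiece 𝒜 ℬ (0 : Λ) :=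
    Submodule.subset_span ⟨1, SetLike.one_mem_graded 𝒜, 1, SetLike.one_mem_graded ℬ, rfl⟩
  have hmul : ∀ l₁ l₂ : Λ,
      diagTensorPiece 𝒜 ℬ l₁ * diagTensorPiece 𝒜 ℬ l₂ ≤ diagTensorPiece 𝒜 ℬ (l₁ + l₂) := by
    intro l₁ l₂
    unfold diagTensorPiece
    rw [Submodule.span_mul_span]
    refine Submodule.span_mono ?_
    rintro _ ⟨_, ⟨a, ha, b, hb, rfl⟩, _, ⟨a', ha', b', hb', rfl⟩, rfl⟩
    exact ⟨a * a', SetLike.mul_mem_graded ha ha', b * b', SetLike.mul_mem_graded hb hb',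
      Algebra.TensorProduct.tmul_mul_tmul a a' b b'⟩
  have hsup : (⨆ l, diagTensorPiece 𝒜 ℬ l) * (⨆ l, diagTensorPiece 𝒜 ℬ l) ≤
      ⨆ l, diagTensorPiece 𝒜 ℬ l := by
    rw [Submodule.iSup_mul]
    refine iSup_le fun l₁ => ?_
    rw [Submodule.mul_iSup]
    exact iSup_le fun l₂ => (hmul l₁ l₂).trans (le_iSup (diagTensorPiece 𝒜 ℬ) (l₁ + l₂))
  exact ⟨h1, hmul, diagTensorPiece_iSupIndep 𝒜 ℬ,
    Submodule.toSubalgebra _ (Submodule.mem_iSup_of_mem 0 h1)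
      (fun x y hx hy => hsup (Submodule.mul_mem_mul hx hy)),
    Submodule.toSubalgebra_toSubmodule _ _ _⟩
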